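/- Let I_ph, I_o, A, R_s, G_sh > 0, let I : ℝ → ℝ be the SDM solution function, let I_sc := I(0) and let V_oc > 0 satisfy I(V_oc) = 0. Then the power function P(V) = V·I(V) attains its maximum over [0, V_oc] at some point, and every maximizer V_mp of P over [0, V_oc] satisfies V_oc/2 < V_mp < V_oc and I_sc/2 < I(V_mp) < I_sc. -/

import Mathlib

/-!
At a maximizer `x` of a product `f * g` of nonnegative concave functions, the first-order condition
along the segment from `x` to `y` reads `f x * g y + f y * g x ≤ 2 * (f x * g x)`, with strict
inequality if `g` is strictly concave, `0 < f x` and `y ≠ x`. So if both factors are positive at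
`x`, each of them exceeds there half of each of its values. For the power `V * I V` on `[0, Voc]`
the factors have largest values `Voc` and `I 0`.

Strict concavity of `I` needs no derivatives: the current is a strictly decreasing, strictly concave
function `F` of the voltage `V + Rs * I V` across the diode, and a chord of `I` violating strict
concavity would, by monotonicity, give one of `F`.
-/

open Set

section ProductOfConcave

variable {𝕜 E : Type*} [Field 𝕜] [LinearOrder 𝕜] [IsStrictOrderedRing 𝕜]
  [AddCommMonoid E] [Module 𝕜 E] {s : Set E} {f g : E → 𝕜} {x y : E}

theorem mul_add_mul_le_of_isMaxOn_mul (hf : ConcaveOn 𝕜 s f) (hg : ConcaveOn 𝕜 s g)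
    (hf₀ : ∀ z ∈ s, 0 ≤ f z) (hg₀ : ∀ z ∈ s, 0 ≤ g z)
    (hmax : IsMaxOn (fun z ↦ f z * g z) s x) (hx : x ∈ s) (hy : y ∈ s) :
    f x * g y + f y * g x ≤ 2 * (f x * g x) := by
  have hfx := hf₀ x hx
  have hfy := hf₀ y hy
  have hgx := hg₀ x hx
  have hgy := hg₀ y hy
  have hP : 0 ≤ f x * g x := mul_nonneg hfx hgx
  set S := f x * g y + f y * g x with hS
  have first_order : ∀ t, 0 < t → t < 1 → (1 - t) * S ≤ (2 - t) * (f x * g x) := by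
    intro t ht ht₁
    have ht' : 0 ≤ 1 - t := sub_nonneg.2 ht₁.le
    have hfz : (1 - t) * f x + t * f y ≤ f ((1 - t) • x + t • y) :=
      hf.2 hx hy ht' ht.le (sub_add_cancel 1 t)
    have hgz : (1 - t) * g x + t * g y ≤ g ((1 - t) • x + t • y) :=
      hg.2 hx hy ht' ht.le (sub_add_cancel 1 t)
    have hz : (1 - t) • x + t • y ∈ s := hf.1 hx hy ht' ht.le (sub_add_cancel 1 t)
    have hprod : ((1 - t) * f x + t * f y) * ((1 - t) * g x + t * g y) ≤ f x * g x :=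
      (mul_le_mul hfz hgz (by positivity) (hf₀ _ hz)).trans (hmax hz)
    refine le_of_mul_le_mul_left ?_ ht
    calc t * ((1 - t) * S)
        = ((1 - t) * f x + t * f y) * ((1 - t) * g x + t * g y)
            - (1 - t) ^ 2 * (f x * g x) - t ^ 2 * (f y * g y) := by rw [hS]; ring
      _ ≤ f x * g x - (1 - t) ^ 2 * (f x * g x) := by
        linarith [mul_nonneg (sq_nonneg t) (mul_nonneg hfy hgy)]
      _ = t * ((2 - t) * (f x * g x)) := by ring
  by_contra! hlt
  have hS₀ : 0 < S := by linarith
  -- This `t` makes `(1 - t) * S` the mean of `S` and `2 * (f x * g x)`.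
  obtain ⟨t, ht⟩ : ∃ t, t * (2 * S) = S - 2 * (f x * g x) :=
    ⟨_, div_mul_cancel₀ _ (by positivity)⟩
  have ht₀ : 0 < t := pos_of_mul_pos_left (b := 2 * S) (by linarith) (by linarith)
  have ht₁ : t < 1 := lt_of_mul_lt_mul_right (a := 2 * S) (by linarith) (by linarith)
  linarith [first_order t ht₀ ht₁, mul_nonneg ht₀.le hP]

theorem mul_add_mul_lt_of_isMaxOn_mul (hf : ConcaveOn 𝕜 s f) (hg : StrictConcaveOn 𝕜 s g)
    (hf₀ : ∀ z ∈ s, 0 ≤ f z) (hg₀ : ∀ z ∈ s, 0 ≤ g z)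
    (hmax : IsMaxOn (fun z ↦ f z * g z) s x) (hx : x ∈ s) (hy : y ∈ s) (hxy : x ≠ y)
    (hfx : 0 < f x) : f x * g y + f y * g x < 2 * (f x * g x) := by
  have half_add_half : (1 / 2 : 𝕜) + 1 / 2 = 1 := add_halves 1
  have hfm := hf.2 hx hy one_half_pos.le one_half_pos.le half_add_half
  have hgm := hg.2 hx hy hxy one_half_pos one_half_pos half_add_half
  have hm := hf.1 hx hy one_half_pos.le one_half_pos.le half_add_half
  have hle := mul_add_mul_le_of_isMaxOn_mul hf hg.concaveOn hf₀ hg₀ hmax hx hm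
  simp only [smul_eq_mul] at hfm hgm
  linarith [mul_lt_mul_of_pos_left hgm hfx, mul_le_mul_of_nonneg_right hfm (hg₀ x hx)]

theorem lt_two_mul_of_isMaxOn_mul (hf : ConcaveOn 𝕜 s f) (hg : StrictConcaveOn 𝕜 s g)
    (hf₀ : ∀ z ∈ s, 0 ≤ f z) (hg₀ : ∀ z ∈ s, 0 ≤ g z)
    (hmax : IsMaxOn (fun z ↦ f z * g z) s x) (hx : x ∈ s) (hy : y ∈ s)
    (hfx : 0 < f x) (hgx : 0 < g x) : f y < 2 * f x ∧ g y < 2 * g x := by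
  rcases eq_or_ne x y with rfl | hxy
  · exact ⟨lt_two_mul_self hfx, lt_two_mul_self hgx⟩
  have hlt := mul_add_mul_lt_of_isMaxOn_mul hf hg hf₀ hg₀ hmax hx hy hxy hfx
  constructor
  · refine lt_of_mul_lt_mul_right ?_ hgx.le
    linarith [mul_nonneg hfx.le (hg₀ y hy)]
  · refine lt_of_mul_lt_mul_left ?_ hfx.le
    linarith [mul_nonneg (hf₀ y hy) hgx.le]

end ProductOfConcave

section SeriesResistance

variable {𝕜 : Type*} [Field 𝕜] [LinearOrder 𝕜] [IsStrictOrderedRing 𝕜] {F I : 𝕜 → 𝕜} {R : 𝕜}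

theorem strictAnti_of_eq_comp_add_mul (hF : StrictAnti F) (hR : 0 ≤ R)
    (hI : ∀ V, I V = F (V + R * I V)) : StrictAnti I := by
  intro a b hab
  by_contra! hle
  have hlt : F (b + R * I b) < F (a + R * I a) :=
    hF (add_lt_add_of_lt_of_le hab (mul_le_mul_of_nonneg_left hle hR))
  rw [← hI, ← hI] at hlt
  exact hlt.not_ge hle

theorem strictConcaveOn_of_eq_comp_add_mul (hF : Antitone F) (hFc : StrictConcaveOn 𝕜 univ F)
    (hR : 0 ≤ R) (hI : ∀ V, I V = F (V + R * I V)) : StrictConcaveOn 𝕜 univ I := by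
  refine ⟨convex_univ, fun a _ b _ hab p q hp hq hpq ↦ ?_⟩
  have hne : a + R * I a ≠ b + R * I b := by
    intro heq
    have hIab : I a = I b := by rw [hI a, hI b, heq]
    rw [hIab] at heq
    exact hab (add_right_cancel heq)
  have hchord := hFc.2 (mem_univ _) (mem_univ _) hne hp hq hpq
  rw [← hI, ← hI] at hchord
  by_contra! hle
  have hvoltage : p • a + q • b + R * I (p • a + q • b) ≤
      p • (a + R * I a) + q • (b + R * I b) := by
    have := mul_le_mul_of_nonneg_left hle hR
    simp only [smul_eq_mul] at this ⊢
    linarith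
  have hcurrent := hF hvoltage
  rw [← hI] at hcurrent
  exact hchord.not_ge (hcurrent.trans hle)

end SeriesResistance

/-- The current delivered by the single-diode circuit as a function of the voltage `z` across the
diode, so that the single-diode model with series resistance `Rs` reads
`I V = junctionCurrent Iph Io A Gsh (V + Rs * I V)`. -/
noncomputable def junctionCurrent (Iph Io A Gsh z : ℝ) : ℝ :=
  Iph - (Io * (Real.exp (z / A) - 1) + Gsh * z)

theorem strictAnti_junctionCurrent {Io A Gsh : ℝ} (Iph : ℝ) (hIo : 0 < Io) (hA : 0 < A)
    (hGsh : 0 ≤ Gsh) : StrictAnti (junctionCurrent Iph Io A Gsh) := by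
  intro a b hab
  have hdiode : Io * (Real.exp (a / A) - 1) < Io * (Real.exp (b / A) - 1) := by gcongr
  have hshunt : Gsh * a ≤ Gsh * b := by gcongr
  exact sub_lt_sub_left (add_lt_add_of_lt_of_le hdiode hshunt) Iph

theorem strictConcaveOn_junctionCurrent {Io A : ℝ} (Iph Gsh : ℝ) (hIo : 0 < Io) (hA : A ≠ 0) :
    StrictConcaveOn ℝ univ (junctionCurrent Iph Io A Gsh) := by
  refine ⟨convex_univ, fun a _ b _ hab p q hp hq hpq ↦ ?_⟩
  have hexp : Real.exp ((p * a + q * b) / A) < p * Real.exp (a / A) + q * Real.exp (b / A) := by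
    have hne : a / A ≠ b / A := mt (div_left_inj' hA).1 hab
    have hconv := strictConvexOn_exp.2 (mem_univ _) (mem_univ _) hne hp hq hpq
    simpa only [smul_eq_mul, add_div, mul_div_assoc] using hconv
  simp only [junctionCurrent, smul_eq_mul]
  linear_combination Io * hexp + (Iph + Io) * hpq

section MaximumPower

variable {I : ℝ → ℝ} {Voc V : ℝ}

theorem pos_of_isMaxOn_id_mul (hanti : StrictAntiOn I (Icc 0 Voc)) (hVoc : 0 < Voc)
    (hVocI : I Voc = 0) (hV : V ∈ Icc 0 Voc)
    (hmax : IsMaxOn (fun V ↦ V * I V) (Icc 0 Voc) V) : 0 < V ∧ 0 < I V := by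
  have hmid : Voc / 2 ∈ Icc 0 Voc := ⟨by linarith, by linarith⟩
  have hImid : 0 < I (Voc / 2) :=
    hVocI ▸ hanti hmid (right_mem_Icc.2 hVoc.le) (half_lt_self hVoc)
  have hpower : 0 < V * I V := (mul_pos (half_pos hVoc) hImid).trans_le (hmax hmid)
  have hV₀ : 0 < V := hV.1.lt_of_ne (left_ne_zero_of_mul hpower.ne').symm
  exact ⟨hV₀, pos_of_mul_pos_right hpower hV₀.le⟩

theorem half_lt_and_lt_of_isMaxOn_id_mul (hanti : StrictAntiOn I (Icc 0 Voc))
    (hconc : StrictConcaveOn ℝ (Icc 0 Voc) I) (hVoc : 0 < Voc) (hVocI : I Voc = 0)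
    (hV : V ∈ Icc 0 Voc) (hmax : IsMaxOn (fun V ↦ V * I V) (Icc 0 Voc) V) :
    Voc / 2 < V ∧ V < Voc ∧ I 0 / 2 < I V ∧ I V < I 0 := by
  obtain ⟨hV₀, hIV₀⟩ := pos_of_isMaxOn_id_mul hanti hVoc hVocI hV hmax
  have h0 : (0 : ℝ) ∈ Icc 0 Voc := left_mem_Icc.2 hVoc.le
  have hoc : Voc ∈ Icc 0 Voc := right_mem_Icc.2 hVoc.le
  have hI₀ : ∀ z ∈ Icc 0 Voc, 0 ≤ I z := fun z hz ↦ hVocI ▸ hanti.antitoneOn hz hoc hz.2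
  have half_lt : ∀ y ∈ Icc 0 Voc, y < 2 * V ∧ I y < 2 * I V := fun y hy ↦
    lt_two_mul_of_isMaxOn_mul (concaveOn_id (convex_Icc 0 Voc)) hconc (fun z hz ↦ hz.1) hI₀ hmax
      hV hy hV₀ hIV₀
  have hV_ne : V ≠ Voc := fun h ↦ hIV₀.ne' (h ▸ hVocI)
  exact ⟨by linarith [(half_lt Voc hoc).1], hV.2.lt_of_ne hV_ne,
    by linarith [(half_lt 0 h0).2], hanti h0 hV hV₀⟩

end MaximumPower

theorem stmt_6_general {F I : ℝ → ℝ} {R Voc : ℝ} (hF : StrictAnti F)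
    (hFc : StrictConcaveOn ℝ univ F) (hR : 0 ≤ R) (hI : ∀ V, I V = F (V + R * I V))
    (hVoc : 0 < Voc) (hVocI : I Voc = 0) :
    (∃ Vmp ∈ Icc (0 : ℝ) Voc, IsMaxOn (fun V ↦ V * I V) (Icc 0 Voc) Vmp) ∧
    ∀ Vmp ∈ Icc (0 : ℝ) Voc, IsMaxOn (fun V ↦ V * I V) (Icc 0 Voc) Vmp →
      Voc / 2 < Vmp ∧ Vmp < Voc ∧ I 0 / 2 < I Vmp ∧ I Vmp < I 0 := by
  have hanti : StrictAnti I := strictAnti_of_eq_comp_add_mul hF hR hI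
  have hconc : StrictConcaveOn ℝ univ I :=
    strictConcaveOn_of_eq_comp_add_mul hF.antitone hFc hR hI
  have hcont : ContinuousOn I (Icc 0 Voc) :=
    (hconc.concaveOn.continuousOn isOpen_univ).mono (subset_univ _)
  exact ⟨isCompact_Icc.exists_isMaxOn (nonempty_Icc.2 hVoc.le) (continuousOn_id.mul hcont),
    fun Vmp hVmp hmax ↦ half_lt_and_lt_of_isMaxOn_id_mul (hanti.strictAntiOn _)
      (hconc.subset (subset_univ _) (convex_Icc 0 Voc)) hVoc hVocI hVmp hmax⟩

/-- The power P(V) = V·I(V) of the SDM attains its maximum over [0, V_oc], and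
every maximizer V_mp satisfies V_oc/2 < V_mp < V_oc and I_sc/2 < I(V_mp) < I_sc. -/
theorem stmt_6 (Iph Io A Rs Gsh : ℝ)
    (hIph : 0 < Iph) (hIo : 0 < Io) (hA : 0 < A) (hRs : 0 < Rs) (hGsh : 0 < Gsh)
    (I : ℝ → ℝ)
    (hI : ∀ V, Iph = Io * (Real.exp ((V + Rs * I V) / A) - 1) + Gsh * (V + Rs * I V) + I V)
    (Voc : ℝ) (hVoc : 0 < Voc) (hVocI : I Voc = 0) :
    (∃ Vmp ∈ Set.Icc (0 : ℝ) Voc, IsMaxOn (fun V => V * I V) (Set.Icc 0 Voc) Vmp) ∧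
    ∀ Vmp ∈ Set.Icc (0 : ℝ) Voc, IsMaxOn (fun V => V * I V) (Set.Icc 0 Voc) Vmp →
      Voc / 2 < Vmp ∧ Vmp < Voc ∧ I 0 / 2 < I Vmp ∧ I Vmp < I 0 :=
  stmt_6_general (strictAnti_junctionCurrent Iph hIo hA hGsh.le)
    (strictConcaveOn_junctionCurrent Iph Gsh hIo hA.ne') hRs.le
    (fun V ↦ eq_sub_of_add_eq' (hI V).symm) hVoc hVocI
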